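/- Let N ≥ 1 and s ∈ (0,1). Let A be an N×N real matrix and let w : ℝ^N → ℝ be smooth with compact support. Define the kernel ω_A(y,z) := (c_{N,s}/2) · [ 2·tr(A) − (N+2s) · ((A(y−z)) · (y−z)) / |y−z|² ] for y ≠ z. Then ∬_{ℝ^N×ℝ^N} (w(y) − w(z))² · |y−z|^{−N−2s} · ω_A(y,z) dy dz = −2 ∫_{ℝ^N} (∇w(y) · (Ay)) · (−Δ)^s w(y) dy, where the double integral is absolutely convergent. -/

import Mathlib

/-!
In the variables `(y, h)` with `z = y + h`, put `D(y) = ∇w(y) · Ay` and `K(h) = |h|^{-N-2s}`. The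
linear field `(Ay, Ah)` on `ℝ^N × ℝ^N` has divergence `2 tr A`, and along it the derivative of
`w(y) - w(y+h)` is `D(y) - D(y+h)`, while that of `K` is `-(N+2s) (Ah · h) / |h|² K(h)`. The
divergence theorem for `(w(y) - w(y+h))² K(h) (Ay, Ah)` therefore says

`∬ (w(y) - w(y+h))² (2 tr A - (N+2s) (Ah · h)/|h|²) K = -2 ∬ (w(y) - w(y+h)) (D(y) - D(y+h)) K`,

whose left side is the double integral up to the factor `c_{N,s}/2`. To justify it, `K` is replaced
by the compactly supported `C¹` kernels of `exists_regularized_kernel`, for which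
`integral_fderiv_linear_field` applies, and `ε → 0⁺` is taken by dominated convergence
(`integral_divergence_identity`). The majorant is `min(1, |h|²) K(h)` times the indicator that `y`
or `y + h` lies in the support of `w`.

The right side is the bilinear form of the fractional Laplacian: for fixed `h` a translation turns
`∫ (w(y) - w(y+h)) (D(y) - D(y+h)) dy` into `∫ D(y) (2w(y) - w(y+h) - w(y-h)) dy`, and Fubini's
theorem, licensed by the `|h|²` bound on second differences, gives `∫ D (-Δ)^s w`
(`integral_incr_mul_incr`).
-/

open MeasureTheory
open scoped RealInnerProductSpace

noncomputable section

/-- The normalizing constant `c_{N,s} = π^{-N/2} s 4^s Γ((N+2s)/2) / Γ(1-s)`. -/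
def cNs (N : ℕ) (s : ℝ) : ℝ :=
  Real.pi ^ (-(N : ℝ) / 2) * s * (4 : ℝ) ^ s *
    Real.Gamma (((N : ℝ) + 2 * s) / 2) / Real.Gamma (1 - s)

/-- The fractional Laplacian, defined pointwise by
`(-Δ)^s u(x) = (c_{N,s}/2) ∫ (2u(x) - u(x+z) - u(x-z)) |z|^{-N-2s} dz`. -/
def fracLap (N : ℕ) (s : ℝ) (u : EuclideanSpace ℝ (Fin N) → ℝ)
    (x : EuclideanSpace ℝ (Fin N)) : ℝ :=
  cNs N s / 2 * ∫ z : EuclideanSpace ℝ (Fin N),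
    (2 * u x - u (x + z) - u (x - z)) * ‖z‖ ^ (-(N : ℝ) - 2 * s)

/-- The kernel `ω_A(y,z) = (c_{N,s}/2) [2 tr A - (N+2s) ⟨A(y-z), y-z⟩ / |y-z|²]`. -/
def omegaA (N : ℕ) (s : ℝ) (A : Matrix (Fin N) (Fin N) ℝ)
    (y z : EuclideanSpace ℝ (Fin N)) : ℝ :=
  cNs N s / 2 * (2 * A.trace -
    ((N : ℝ) + 2 * s) * ⟪Matrix.toEuclideanLin A (y - z), y - z⟫ / ‖y - z‖ ^ 2)

/-! ### The divergence identity for linear vector fields -/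

/-- The divergence theorem for the field `x ↦ F x • L x` with `F` compactly supported: its
divergence `fderiv F x (L x) + tr L * F x` integrates to zero. -/
lemma integral_fderiv_linear_field {V : Type*} [NormedAddCommGroup V] [NormedSpace ℝ V]
    [FiniteDimensional ℝ V] [MeasurableSpace V] [BorelSpace V] (μ : Measure V)
    [μ.IsAddHaarMeasure] (L : V →L[ℝ] V) {F : V → ℝ} (hF : ContDiff ℝ 1 F)
    (hFc : HasCompactSupport F) :
    ∫ x, fderiv ℝ F x (L x) ∂μ = -(LinearMap.trace ℝ V L.toLinearMap * ∫ x, F x ∂μ) := by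
  classical
  let b := Module.finBasis ℝ V
  let g : Fin (Module.finrank ℝ V) → V →L[ℝ] ℝ := fun i =>
    (LinearMap.toContinuousLinearMap (b.coord i)).comp L
  have hgapp : ∀ i x, g i x = b.repr (L x) i := fun i x => rfl
  have hF' : Continuous (fderiv ℝ F) := hF.continuous_fderiv (by norm_num)
  have hint : ∀ i, Integrable (fun x => fderiv ℝ F x (b i) * g i x) μ := fun i =>
    Continuous.integrable_of_hasCompactSupport
      (by fun_prop) ((hFc.fderiv_apply ℝ (b i)).mul_right)
  have key : ∀ i, ∫ x, fderiv ℝ F x (b i) * g i x ∂μ = -(g i (b i) * ∫ x, F x ∂μ) := by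
    intro i
    have h := integral_mul_fderiv_eq_neg_fderiv_mul_of_integrable (μ := μ) (f := F) (g := g i)
      (v := b i) (hint i)
      (Continuous.integrable_of_hasCompactSupport (by
        simp only [ContinuousLinearMap.fderiv]
        exact hF.continuous.mul continuous_const) hFc.mul_right)
      (Continuous.integrable_of_hasCompactSupport (by
        exact hF.continuous.mul (g i).continuous) hFc.mul_right)
      (fun x _ => (hF.differentiable (by norm_num)) x) (fun x _ => (g i).differentiableAt)
    simp only [ContinuousLinearMap.fderiv, integral_mul_const] at h
    rw [mul_comm (g i (b i)), h, neg_neg]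
  have hsum : ∀ x, fderiv ℝ F x (L x) = ∑ i, fderiv ℝ F x (b i) * g i x := by
    intro x
    conv_lhs => rw [← b.sum_repr (L x)]
    simp only [map_sum, map_smul, smul_eq_mul, hgapp, mul_comm]
  have htr : LinearMap.trace ℝ V L.toLinearMap = ∑ i, g i (b i) := by
    rw [LinearMap.trace_eq_matrix_trace ℝ b]
    simp [Matrix.trace, LinearMap.toMatrix_apply, hgapp]
  simp_rw [hsum]
  rw [integral_finsetSum _ (fun i _ => hint i), htr, Finset.sum_mul]
  simp [key]

/-! ### Integrable majorants -/

/-- The radial majorant `min(1, |h|²) |h|^{-N-2s}` of all kernels in the argument. -/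
def kerMaj (N : ℕ) (s : ℝ) (h : EuclideanSpace ℝ (Fin N)) : ℝ :=
  min 1 (‖h‖ ^ 2) * ‖h‖ ^ (-(N : ℝ) - 2 * s)

lemma kerMaj_nonneg (N : ℕ) (s : ℝ) (h : EuclideanSpace ℝ (Fin N)) : 0 ≤ kerMaj N s h := by
  unfold kerMaj; positivity

lemma integrable_kerMaj {N : ℕ} (hN : 1 ≤ N) {s : ℝ} (hs : s ∈ Set.Ioo (0 : ℝ) 1) :
    Integrable (kerMaj N s) := by
  obtain ⟨hs0, hs1⟩ := hs
  have : Nonempty (Fin N) := ⟨⟨0, hN⟩⟩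
  have : Nontrivial (EuclideanSpace ℝ (Fin N)) := inferInstance
  refine (integrable_fun_norm_addHaar (E := EuclideanSpace ℝ (Fin N)) volume
    (f := fun r : ℝ => min 1 (r ^ 2) * r ^ (-(N : ℝ) - 2 * s))).2 ?_
  simp only [finrank_euclideanSpace, Fintype.card_fin, smul_eq_mul]
  have hcast : ((N - 1 : ℕ) : ℝ) = (N : ℝ) - 1 := by push_cast [hN]; ring
  rw [← Set.Ioc_union_Ioi_eq_Ioi (zero_le_one' ℝ)]
  refine IntegrableOn.union ?_ ?_
  · have h1 : IntegrableOn (fun r : ℝ => r ^ (1 - 2 * s)) (Set.Ioc 0 1) :=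
      (intervalIntegrable_iff_integrableOn_Ioc_of_le zero_le_one).1
        (intervalIntegral.intervalIntegrable_rpow' (by linarith))
    refine h1.congr_fun (fun r hr => ?_) measurableSet_Ioc
    have hr0 : 0 < r := hr.1
    have : min 1 (r ^ 2) = r ^ 2 := min_eq_right (by nlinarith [hr.2])
    simp only [this]
    rw [← Real.rpow_natCast r (N - 1), ← Real.rpow_natCast r 2, ← Real.rpow_add hr0,
      ← Real.rpow_add hr0, hcast]
    congr 1; push_cast; ring
  · have h1 : IntegrableOn (fun r : ℝ => r ^ (-1 - 2 * s)) (Set.Ioi 1) :=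
      integrableOn_Ioi_rpow_of_lt (by linarith) one_pos
    refine h1.congr_fun (fun r hr => ?_) measurableSet_Ioi
    have hr1 : 1 < r := hr
    have hr0 : 0 < r := by linarith
    have : min 1 (r ^ 2) = 1 := min_eq_left (by nlinarith)
    simp only [this]
    rw [← Real.rpow_natCast r (N - 1), one_mul, ← Real.rpow_add hr0, hcast]
    congr 1; ring

/-- The majorant on `ℝ^N × ℝ^N` in the variables `(y, h)`: one of `y`, `y + h` lies in `S`. -/
def prodMaj (N : ℕ) (s : ℝ) (S : Set (EuclideanSpace ℝ (Fin N)))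
    (p : EuclideanSpace ℝ (Fin N) × EuclideanSpace ℝ (Fin N)) : ℝ :=
  (S.indicator 1 p.1 + S.indicator 1 (p.1 + p.2)) * kerMaj N s p.2

lemma integrable_prodMaj {N : ℕ} (hN : 1 ≤ N) {s : ℝ} (hs : s ∈ Set.Ioo (0 : ℝ) 1)
    {S : Set (EuclideanSpace ℝ (Fin N))} (hS : IsCompact S) : Integrable (prodMaj N s S) := by
  have hi : Integrable (S.indicator (1 : EuclideanSpace ℝ (Fin N) → ℝ)) :=
    (integrable_indicator_iff hS.measurableSet).2
      (integrableOn_const hS.measure_lt_top.ne)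
  have h1 := hi.mul_prod (integrable_kerMaj hN hs)
  have h2 := (measurePreserving_add_prod (volume : Measure (EuclideanSpace ℝ (Fin N)))
    volume).integrable_comp_of_integrable h1
  refine (h1.add h2).congr (Filter.Eventually.of_forall fun p => ?_)
  simp [prodMaj, add_mul]

/-- A compactly supported `C¹` function has increments of order `min(1, |h|)`. -/
lemma exists_increment_bound {V : Type*} [NormedAddCommGroup V] [NormedSpace ℝ V]
    {f : V → ℝ} (hf : ContDiff ℝ 1 f)
    (hfc : HasCompactSupport f) :
    ∃ C, 0 ≤ C ∧ ∀ y h, |f y - f (y + h)| ≤ C * min 1 ‖h‖ := by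
  obtain ⟨C, hC⟩ := hf.lipschitzWith_of_hasCompactSupport hfc (by norm_num)
  obtain ⟨B, hB⟩ := hfc.exists_bound_of_continuous hf.continuous
  have hB0 : 0 ≤ B := (norm_nonneg _).trans (hB 0)
  refine ⟨max C (2 * B), by positivity, fun y h => ?_⟩
  rw [mul_min_of_nonneg _ _ (by positivity)]
  refine le_min ?_ ?_
  · have h1 := hB y
    have h2 := hB (y + h)
    rw [Real.norm_eq_abs] at h1 h2
    calc _ ≤ |f y| + |f (y + h)| := abs_sub _ _
      _ ≤ 2 * B := by linarith
      _ ≤ _ := by simp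
  · have h1 := hC.dist_le_mul y (y + h)
    rw [Real.dist_eq, dist_self_add_right] at h1
    exact h1.trans (by gcongr; simp)

/-- Second differences of a `C²` function of compact support are bounded by `min(1, |h|²)`. -/
lemma exists_second_difference_bound {V : Type*} [NormedAddCommGroup V] [NormedSpace ℝ V]
    {f : V → ℝ}
    (hf : ContDiff ℝ 2 f) (hfc : HasCompactSupport f) :
    ∃ C, 0 ≤ C ∧ ∀ y h, |2 * f y - f (y + h) - f (y - h)| ≤ C * min 1 (‖h‖ ^ 2) := by
  have hf' : ContDiff ℝ 1 (fderiv ℝ f) := hf.fderiv_right (by norm_num)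
  obtain ⟨C, hC⟩ := hf'.lipschitzWith_of_hasCompactSupport (hfc.fderiv ℝ) (by norm_num)
  obtain ⟨B, hB⟩ := hfc.exists_bound_of_continuous hf.continuous
  have hB0 : 0 ≤ B := (norm_nonneg _).trans (hB 0)
  have hd : Differentiable ℝ f := hf.differentiable (by norm_num)
  refine ⟨max (2 * C) (4 * B), by positivity, fun y h => ?_⟩
  rw [mul_min_of_nonneg _ _ (by positivity)]
  refine le_min ?_ ?_
  · have h1 := abs_le.1 (hB y)
    have h2 := abs_le.1 (hB (y + h))
    have h3 := abs_le.1 (hB (y - h))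
    have h4 : 4 * B ≤ max (2 * (C : ℝ)) (4 * B) := le_max_right _ _
    rw [abs_le]
    constructor <;> linarith
  · -- Mean value inequality on the ball of radius `|h|` for `x ↦ 2 f(y) - f(y+x) - f(y-x)`.
    have hder : ∀ x ∈ Metric.closedBall (0 : V) ‖h‖,
        HasFDerivWithinAt (fun x => 2 * f y - f (y + x) - f (y - x))
          (fderiv ℝ f (y - x) - fderiv ℝ f (y + x)) (Metric.closedBall 0 ‖h‖) x := by
      intro x _
      have e1 : HasFDerivAt (fun x => f (y + x)) (fderiv ℝ f (y + x)) x := by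
        have := (hd (y + x)).hasFDerivAt.comp x ((hasFDerivAt_id x).const_add y)
        exact this
      have e2 : HasFDerivAt (fun x => f (y - x)) (-fderiv ℝ f (y - x)) x := by
        have := (hd (y - x)).hasFDerivAt.comp x ((hasFDerivAt_id x).const_sub y)
        have e : -fderiv ℝ f (y - x) =
            (fderiv ℝ f (y - x)).comp (-ContinuousLinearMap.id ℝ V) := by ext v; simp
        rw [e]
        exact this
      have e3 := ((e1.const_sub (2 * f y)).sub e2)
      refine HasFDerivAt.hasFDerivWithinAt ?_
      have e : fderiv ℝ f (y - x) - fderiv ℝ f (y + x) =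
          -fderiv ℝ f (y + x) - -fderiv ℝ f (y - x) := by abel
      rw [e]
      exact e3
    have hb : ∀ x ∈ Metric.closedBall (0 : V) ‖h‖,
        ‖fderiv ℝ f (y - x) - fderiv ℝ f (y + x)‖ ≤ 2 * C * ‖h‖ := by
      intro x hx
      have h1 := hC.dist_le_mul (y - x) (y + x)
      rw [dist_eq_norm, dist_eq_norm] at h1
      have h2 : ‖y - x - (y + x)‖ ≤ 2 * ‖h‖ := by
        have : y - x - (y + x) = -((2 : ℝ) • x) := by rw [two_smul]; abel
        rw [this, norm_neg, norm_smul]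
        simpa using hx
      calc _ ≤ _ := h1
        _ ≤ C * (2 * ‖h‖) := by gcongr
        _ = _ := by ring
    have := (convex_closedBall (0 : V) ‖h‖).norm_image_sub_le_of_norm_hasFDerivWithin_le
      hder hb (x := 0) (y := h) (by simp) (by simp)
    have h0 : 2 * f y - f (y + 0) - f (y - 0) = 0 := by simp; ring
    rw [h0, sub_zero, sub_zero, Real.norm_eq_abs] at this
    calc _ ≤ _ := this
      _ = 2 * C * ‖h‖ ^ 2 := by ring
      _ ≤ _ := by gcongr; simp

/-- A product of two increments and a kernel of size `|h|^{-N-2s}` is controlled by `prodMaj`. -/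
lemma abs_increments_mul_le {N : ℕ} {s : ℝ} {S : Set (EuclideanSpace ℝ (Fin N))}
    (p : EuclideanSpace ℝ (Fin N) × EuclideanSpace ℝ (Fin N)) {u d x C₁ C₂ C₃ : ℝ}
    (h₁ : 0 ≤ C₁) (h₂ : 0 ≤ C₂) (h₃ : 0 ≤ C₃)
    (hu : |u| ≤ C₁ * min 1 ‖p.2‖) (hd : |d| ≤ C₂ * min 1 ‖p.2‖)
    (hx : p.2 ≠ 0 → |x| ≤ C₃ * ‖p.2‖ ^ (-(N : ℝ) - 2 * s))
    (hS : p.1 ∉ S → p.1 + p.2 ∉ S → u = 0) :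
    |u * d * x| ≤ C₁ * C₂ * C₃ * prodMaj N s S p := by
  have hind : ∀ y, (0 : ℝ) ≤ S.indicator 1 y := fun y =>
    Set.indicator_nonneg (fun _ _ => zero_le_one) y
  have hmaj : 0 ≤ prodMaj N s S p :=
    mul_nonneg (add_nonneg (hind _) (hind _)) (kerMaj_nonneg _ _ _)
  by_cases hu0 : u = 0
  · simp only [hu0, zero_mul, abs_zero]; positivity
  have hh : p.2 ≠ 0 := by
    intro h0
    apply hu0
    simpa [h0] using hu
  have hone : (1 : ℝ) ≤ S.indicator 1 p.1 + S.indicator 1 (p.1 + p.2) := by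
    by_cases hy : p.1 ∈ S
    · have := hind (p.1 + p.2)
      rw [Set.indicator_of_mem hy]
      simpa using this
    · have hz : p.1 + p.2 ∈ S := by
        by_contra hz
        exact hu0 (hS hy hz)
      have := hind p.1
      rw [Set.indicator_of_mem hz]
      simpa using this
  have hm : min 1 ‖p.2‖ * min 1 ‖p.2‖ = min 1 (‖p.2‖ ^ 2) := by
    rcases le_total ‖p.2‖ 1 with h | h
    · rw [min_eq_right h, min_eq_right (by nlinarith [norm_nonneg p.2])]; ring
    · rw [min_eq_left h, min_eq_left (by nlinarith)]; ring
  calc |u * d * x| = |u| * |d| * |x| := by rw [abs_mul, abs_mul]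
    _ ≤ (C₁ * min 1 ‖p.2‖) * (C₂ * min 1 ‖p.2‖) * (C₃ * ‖p.2‖ ^ (-(N : ℝ) - 2 * s)) := by
        have := hx hh
        gcongr
    _ = C₁ * C₂ * C₃ * (1 * kerMaj N s p.2) := by
        rw [kerMaj, ← hm]; ring
    _ ≤ C₁ * C₂ * C₃ * prodMaj N s S p := by
        unfold prodMaj
        have := kerMaj_nonneg N s p.2
        gcongr

/-! ### Regularized kernels -/

lemma exists_cutoff : ∃ χ : ℝ → ℝ, ContDiff ℝ 1 χ ∧ χ 0 = 1 ∧ (∀ u, |χ u| ≤ 1) ∧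
    (∀ u, 2 ≤ u → χ u = 0) ∧ ∃ B, 0 ≤ B ∧ ∀ u, |u * deriv χ u| ≤ B := by
  let f : ContDiffBump (0 : ℝ) := ⟨1, 2, one_pos, one_lt_two⟩
  have hf : ContDiff ℝ 1 f := f.contDiff
  have hd : Continuous (deriv f) := hf.continuous_deriv le_rfl
  refine ⟨f, hf, ?_, fun u => ?_, fun u hu => ?_, ?_⟩
  · exact f.one_of_mem_closedBall (by simp [f])
  · rw [abs_of_nonneg f.nonneg]; exact f.le_one
  · apply f.zero_of_le_dist
    simp only [dist_zero_right, Real.norm_eq_abs]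
    exact hu.trans (le_abs_self u)
  · obtain ⟨B, hB⟩ := (f.hasCompactSupport.deriv.mul_left (f := fun u : ℝ => u)).exists_bound_of_continuous
      (continuous_id.mul hd)
    exact ⟨B, (norm_nonneg _).trans (hB 0), fun u => hB u⟩

/-- The singular kernel `|h|^q`, `q < 0`, is the limit as `ε → 0⁺` of `C¹` compactly supported
kernels `χ(ε|h|²) (|h|² + ε)^{q/2}` which, along with their (scale-invariant) first derivatives,
are dominated by it uniformly in `ε`. -/
lemma exists_regularized_kernel (H : Type*) [NormedAddCommGroup H] [InnerProductSpace ℝ H]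
    [FiniteDimensional ℝ H] {q : ℝ} (hq : q < 0) :
    ∃ (κ : ℝ → H → ℝ) (C : ℝ), 0 ≤ C ∧
      (∀ ε, 0 < ε → ContDiff ℝ 1 (κ ε) ∧ HasCompactSupport (κ ε)) ∧
      (∀ ε, 0 < ε → ∀ h, h ≠ 0 → |κ ε h| ≤ ‖h‖ ^ q) ∧
      (∀ ε, 0 < ε → ∀ h, h ≠ 0 → ∀ v, ‖h‖ * |fderiv ℝ (κ ε) h v| ≤ C * ‖v‖ * ‖h‖ ^ q) ∧
      (∀ h, h ≠ 0 → Filter.Tendsto (fun ε => κ ε h) (nhdsWithin 0 (Set.Ioi 0))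
        (nhds (‖h‖ ^ q))) ∧
      (∀ h, h ≠ 0 → ∀ v, Filter.Tendsto (fun ε => fderiv ℝ (κ ε) h v)
        (nhdsWithin 0 (Set.Ioi 0)) (nhds (q * ⟪h, v⟫ / ‖h‖ ^ 2 * ‖h‖ ^ q))) := by
  obtain ⟨χ, hχ, hχ0, hχ1, hχ2, B, hB0, hB⟩ := exists_cutoff
  have hχd : Continuous (deriv χ) := hχ.continuous_deriv le_rfl
  let κ : ℝ → H → ℝ := fun ε h => χ (ε * ‖h‖ ^ 2) * (‖h‖ ^ 2 + ε) ^ (q / 2)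
  have hrq : ∀ h : H, (‖h‖ ^ 2) ^ (q / 2) = ‖h‖ ^ q := fun h => by
    rw [← Real.rpow_natCast, ← Real.rpow_mul (norm_nonneg h)]
    congr 1; push_cast; ring
  have hC1 : ∀ ε, 0 < ε → ContDiff ℝ 1 (κ ε) := by
    intro ε hε
    refine ContDiff.mul (hχ.comp (contDiff_const.mul (contDiff_norm_sq ℝ))) ?_
    exact ((contDiff_norm_sq ℝ).add contDiff_const).rpow_const_of_ne
      (fun h => by positivity)
  have hder : ∀ ε, 0 < ε → ∀ h v, fderiv ℝ (κ ε) h v =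
      (ε * deriv χ (ε * ‖h‖ ^ 2) * (‖h‖ ^ 2 + ε) ^ (q / 2) +
        χ (ε * ‖h‖ ^ 2) * (q / 2 * (‖h‖ ^ 2 + ε) ^ (q / 2 - 1))) * (2 * ⟪h, v⟫) := by
    intro ε hε h v
    have hpos : 0 < ‖h‖ ^ 2 + ε := by positivity
    have h1 : HasDerivAt (fun r : ℝ => χ (ε * r) * (r + ε) ^ (q / 2))
        (ε * deriv χ (ε * ‖h‖ ^ 2) * (‖h‖ ^ 2 + ε) ^ (q / 2) +
        χ (ε * ‖h‖ ^ 2) * (q / 2 * (‖h‖ ^ 2 + ε) ^ (q / 2 - 1))) (‖h‖ ^ 2) := by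
      have e1 : HasDerivAt (fun r : ℝ => χ (ε * r)) (deriv χ (ε * ‖h‖ ^ 2) * (ε * 1))
          (‖h‖ ^ 2) :=
        ((hχ.differentiable (by norm_num)) (ε * ‖h‖ ^ 2)).hasDerivAt.comp (‖h‖ ^ 2)
          ((hasDerivAt_id (‖h‖ ^ 2)).const_mul ε)
      have e2 : HasDerivAt (fun r : ℝ => (r + ε) ^ (q / 2))
          (1 * (q / 2) * (‖h‖ ^ 2 + ε) ^ (q / 2 - 1)) (‖h‖ ^ 2) :=
        ((hasDerivAt_id (‖h‖ ^ 2)).add_const ε).rpow_const (Or.inl hpos.ne')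
      exact (e1.mul e2).congr_deriv (by ring)
    have h2 : HasFDerivAt (fun h : H => ‖h‖ ^ 2) (2 • (innerSL ℝ h)) h :=
      (hasStrictFDerivAt_norm_sq h).hasFDerivAt
    have h3 := h1.comp_hasFDerivAt h h2
    have h4 : κ ε = (fun r : ℝ => χ (ε * r) * (r + ε) ^ (q / 2)) ∘ fun h : H => ‖h‖ ^ 2 := rfl
    rw [h4, h3.fderiv]
    simp
  refine ⟨κ, 2 * (B + -(q / 2)), by linarith, fun ε hε => ⟨hC1 ε hε, ?_⟩, ?_, ?_, ?_, ?_⟩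
  · refine HasCompactSupport.intro (isCompact_closedBall (0 : H) (1 + 2 / ε)) fun h hh => ?_
    have hh' : 1 + 2 / ε < ‖h‖ := by simpa using hh
    have hε2 : 0 < 2 / ε := by positivity
    have h3 : 2 / ε ≤ ‖h‖ ^ 2 := by nlinarith
    have : 2 ≤ ε * ‖h‖ ^ 2 := by
      rw [div_le_iff₀ hε] at h3; linarith
    simp [κ, hχ2 _ this]
  · intro ε hε h hh
    have hr : 0 < ‖h‖ ^ 2 := by positivity
    rw [← hrq, abs_mul, abs_of_nonneg (Real.rpow_nonneg (by positivity : 0 ≤ ‖h‖ ^ 2 + ε) _)]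
    calc _ ≤ 1 * (‖h‖ ^ 2 + ε) ^ (q / 2) := by gcongr; exact hχ1 _
      _ ≤ _ := by
        rw [one_mul]
        exact Real.rpow_le_rpow_of_nonpos hr (by linarith) (by linarith)
  · intro ε hε h hh v
    rw [hder ε hε, ← hrq]
    set r := ‖h‖ ^ 2 with hrdef
    have hr : 0 < r := by positivity
    have hle : (r + ε) ^ (q / 2) ≤ r ^ (q / 2) :=
      Real.rpow_le_rpow_of_nonpos hr (by linarith) (by linarith)
    have hP : 0 ≤ (r + ε) ^ (q / 2) := by positivity
    have hle2 : r * (r + ε) ^ (q / 2 - 1) ≤ r ^ (q / 2) := by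
      refine le_trans ?_ hle
      rw [Real.rpow_sub_one (by positivity), ← mul_div_assoc, div_le_iff₀ (by positivity)]
      nlinarith
    have hP2 : 0 ≤ r * (r + ε) ^ (q / 2 - 1) := by positivity
    have hbr : |r * (ε * deriv χ (ε * r) * (r + ε) ^ (q / 2) +
        χ (ε * r) * (q / 2 * (r + ε) ^ (q / 2 - 1)))| ≤ (B + -(q / 2)) * r ^ (q / 2) := by
      calc _ = |(ε * r * deriv χ (ε * r)) * (r + ε) ^ (q / 2) +
            χ (ε * r) * (q / 2) * (r * (r + ε) ^ (q / 2 - 1))| := by congr 1; ring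
        _ ≤ |(ε * r * deriv χ (ε * r)) * (r + ε) ^ (q / 2)| +
            |χ (ε * r) * (q / 2) * (r * (r + ε) ^ (q / 2 - 1))| := abs_add_le _ _
        _ = |ε * r * deriv χ (ε * r)| * (r + ε) ^ (q / 2) +
            |χ (ε * r)| * -(q / 2) * (r * (r + ε) ^ (q / 2 - 1)) := by
          rw [abs_mul, abs_mul (χ (ε * r) * (q / 2)), abs_mul (χ (ε * r)), abs_of_nonneg hP,
            abs_of_nonneg hP2, abs_of_neg (by linarith : q / 2 < 0)]
        _ ≤ B * r ^ (q / 2) + 1 * -(q / 2) * r ^ (q / 2) := by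
          have := hχ1 (ε * r)
          have := hB (ε * r)
          have : 0 ≤ -(q / 2) := by linarith
          gcongr
        _ = _ := by ring
    have hin : ‖h‖ * |2 * ⟪h, v⟫| ≤ r * (2 * ‖v‖) := by
      rw [abs_mul, abs_two, hrdef]
      have := abs_real_inner_le_norm h v
      calc _ ≤ ‖h‖ * (2 * (‖h‖ * ‖v‖)) := by gcongr
        _ = _ := by ring
    rw [abs_mul]
    rw [abs_mul, abs_of_pos hr] at hbr
    set T := |ε * deriv χ (ε * r) * (r + ε) ^ (q / 2) +
        χ (ε * r) * (q / 2 * (r + ε) ^ (q / 2 - 1))|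
    calc ‖h‖ * (T * |2 * ⟪h, v⟫|) = T * (‖h‖ * |2 * ⟪h, v⟫|) := by ring
      _ ≤ T * (r * (2 * ‖v‖)) := by gcongr
      _ = (r * T) * (2 * ‖v‖) := by ring
      _ ≤ ((B + -(q / 2)) * r ^ (q / 2)) * (2 * ‖v‖) := by gcongr
      _ = _ := by ring
  · intro h hh
    have hr : 0 < ‖h‖ ^ 2 := by positivity
    have hc : ContinuousAt (fun ε : ℝ => κ ε h) 0 := by
      refine ContinuousAt.mul ?_ ?_
      · exact (hχ.continuous.comp (continuous_id.mul continuous_const)).continuousAt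
      · exact ContinuousAt.rpow_const (by fun_prop) (Or.inl (by simpa using hh))
    have := hc.tendsto.mono_left (nhdsWithin_le_nhds (s := Set.Ioi 0))
    simpa [κ, hχ0, hrq] using this
  · intro h hh v
    have hr : 0 < ‖h‖ ^ 2 := by positivity
    have hne : ‖h‖ ^ 2 + (0 : ℝ) ≠ 0 := by simpa using hh
    have hc : ContinuousAt (fun ε : ℝ =>
      (ε * deriv χ (ε * ‖h‖ ^ 2) * (‖h‖ ^ 2 + ε) ^ (q / 2) +
        χ (ε * ‖h‖ ^ 2) * (q / 2 * (‖h‖ ^ 2 + ε) ^ (q / 2 - 1))) * (2 * ⟪h, v⟫)) 0 := by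
      have c1 : ContinuousAt (fun ε : ℝ => (‖h‖ ^ 2 + ε) ^ (q / 2)) 0 :=
        ContinuousAt.rpow_const (by fun_prop) (Or.inl hne)
      have c2 : ContinuousAt (fun ε : ℝ => (‖h‖ ^ 2 + ε) ^ (q / 2 - 1)) 0 :=
        ContinuousAt.rpow_const (by fun_prop) (Or.inl hne)
      have c3 : ContinuousAt (fun ε : ℝ => deriv χ (ε * ‖h‖ ^ 2)) 0 :=
        (hχd.comp (continuous_id.mul continuous_const)).continuousAt
      have c4 : ContinuousAt (fun ε : ℝ => χ (ε * ‖h‖ ^ 2)) 0 :=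
        (hχ.continuous.comp (continuous_id.mul continuous_const)).continuousAt
      exact (((continuousAt_id.mul c3).mul c1).add (c4.mul (continuousAt_const.mul c2))).mul
        continuousAt_const
    have := hc.tendsto.mono_left (nhdsWithin_le_nhds (s := Set.Ioi 0))
    refine Filter.Tendsto.congr' (f₁ := fun ε : ℝ =>
      (ε * deriv χ (ε * ‖h‖ ^ 2) * (‖h‖ ^ 2 + ε) ^ (q / 2) +
        χ (ε * ‖h‖ ^ 2) * (q / 2 * (‖h‖ ^ 2 + ε) ^ (q / 2 - 1))) * (2 * ⟪h, v⟫)) ?_ ?_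
    · filter_upwards [self_mem_nhdsWithin] with ε hε
      exact (hder ε hε h v).symm
    · convert this using 2
      simp only [zero_mul, add_zero, zero_add, hχ0, one_mul]
      rw [Real.rpow_sub_one hr.ne', hrq]
      field_simp

/-! ### The identity in the variables `(y, h)` -/

/-- The increment `w(y) - w(y + h)` as a function on `ℝ^N × ℝ^N`. -/
def incr {N : ℕ} (w : EuclideanSpace ℝ (Fin N) → ℝ)
    (p : EuclideanSpace ℝ (Fin N) × EuclideanSpace ℝ (Fin N)) : ℝ :=
  w p.1 - w (p.1 + p.2)

lemma hasCompactSupport_incr_mul {N : ℕ} {w κ : EuclideanSpace ℝ (Fin N) → ℝ}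
    (hw : HasCompactSupport w) (hκ : HasCompactSupport κ) :
    HasCompactSupport (fun p => incr w p ^ 2 * κ p.2) := by
  refine HasCompactSupport.intro
    ((hw.isCompact.union ((hw.isCompact.prod hκ.isCompact).image
      (continuous_fst.sub continuous_snd))).prod hκ.isCompact) fun p hp => ?_
  by_cases hκ0 : κ p.2 = 0
  · simp [hκ0]
  have h2 : p.2 ∈ tsupport κ := subset_tsupport κ hκ0
  have h1 := fun h => hp ⟨h, h2⟩
  have h3 : w p.1 = 0 := image_eq_zero_of_notMem_tsupport fun h => h1 (Or.inl h)
  have h4 : w (p.1 + p.2) = 0 := image_eq_zero_of_notMem_tsupport fun h =>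
    h1 (Or.inr ⟨(p.1 + p.2, p.2), ⟨h, h2⟩, by simp⟩)
  simp [incr, h3, h4]

lemma fderiv_incr_mul {N : ℕ} {w κ : EuclideanSpace ℝ (Fin N) → ℝ} (hw : ContDiff ℝ 1 w)
    (hκ : ContDiff ℝ 1 κ) (L : EuclideanSpace ℝ (Fin N) →L[ℝ] EuclideanSpace ℝ (Fin N))
    (p : EuclideanSpace ℝ (Fin N) × EuclideanSpace ℝ (Fin N)) :
    fderiv ℝ (fun p => incr w p ^ 2 * κ p.2) p (L.prodMap L p) =
      incr w p * incr (fun y => fderiv ℝ w y (L y)) p * (2 * κ p.2) +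
        incr w p * incr w p * fderiv ℝ κ p.2 (L p.2) := by
  have hwd : Differentiable ℝ w := hw.differentiable (by norm_num)
  have hκd : Differentiable ℝ κ := hκ.differentiable (by norm_num)
  have e1 : HasFDerivAt (incr w)
      ((fderiv ℝ w p.1).comp (ContinuousLinearMap.fst ℝ _ _) -
        (fderiv ℝ w (p.1 + p.2)).comp
          (ContinuousLinearMap.fst ℝ _ _ + ContinuousLinearMap.snd ℝ _ _)) p :=
    ((hwd p.1).hasFDerivAt.comp p hasFDerivAt_fst).sub
      ((hwd (p.1 + p.2)).hasFDerivAt.comp p (hasFDerivAt_fst.add hasFDerivAt_snd))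
  have e2 : HasFDerivAt
      (fun p : EuclideanSpace ℝ (Fin N) × EuclideanSpace ℝ (Fin N) => κ p.2)
      ((fderiv ℝ κ p.2).comp (ContinuousLinearMap.snd ℝ _ _)) p :=
    (hκd p.2).hasFDerivAt.comp p hasFDerivAt_snd
  have e3 := (e1.pow 2).mul e2
  have e4 : (fun p => incr w p ^ 2 * κ p.2) = (fun p => incr w p ^ 2) *
      (fun p : EuclideanSpace ℝ (Fin N) × EuclideanSpace ℝ (Fin N) => κ p.2) := rfl
  rw [e4, e3.fderiv]
  simp [incr, ← map_add]
  ring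

lemma contDiff_incr_mul {N : ℕ} {w κ : EuclideanSpace ℝ (Fin N) → ℝ} (hw : ContDiff ℝ 1 w)
    (hκ : ContDiff ℝ 1 κ) : ContDiff ℝ 1 (fun p => incr w p ^ 2 * κ p.2) := by
  unfold incr
  exact (((hw.comp contDiff_fst).sub (hw.comp (contDiff_fst.add contDiff_snd))).pow 2).mul
    (hκ.comp contDiff_snd)

lemma incr_eq_zero {N : ℕ} {w : EuclideanSpace ℝ (Fin N) → ℝ}
    {p : EuclideanSpace ℝ (Fin N) × EuclideanSpace ℝ (Fin N)} (h1 : p.1 ∉ tsupport w)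
    (h2 : p.1 + p.2 ∉ tsupport w) : incr w p = 0 := by
  simp [incr, image_eq_zero_of_notMem_tsupport h1, image_eq_zero_of_notMem_tsupport h2]

lemma measurable_incr {N : ℕ} {w : EuclideanSpace ℝ (Fin N) → ℝ} (hw : Continuous w) :
    Measurable (incr w) := by
  have : Continuous (incr w) := by unfold incr; fun_prop
  exact this.measurable

/-- Products of two increments against a kernel of size `|h|^{-N-2s}` are integrable. -/
lemma integrable_incr_mul_incr_mul {N : ℕ} (hN : 1 ≤ N) {s : ℝ} (hs : s ∈ Set.Ioo (0 : ℝ) 1)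
    {w v : EuclideanSpace ℝ (Fin N) → ℝ} (hw : ContDiff ℝ 1 w) (hwc : HasCompactSupport w)
    (hv : ContDiff ℝ 1 v) (hvc : HasCompactSupport v) {k : EuclideanSpace ℝ (Fin N) → ℝ}
    (hk : Measurable k) {C : ℝ} (hC : 0 ≤ C)
    (hkC : ∀ h, h ≠ 0 → |k h| ≤ C * ‖h‖ ^ (-(N : ℝ) - 2 * s)) :
    Integrable (fun p => incr w p * incr v p * k p.2) := by
  obtain ⟨C₁, hC₁, h1⟩ := exists_increment_bound hw hwc
  obtain ⟨C₂, hC₂, h2⟩ := exists_increment_bound hv hvc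
  refine ((integrable_prodMaj hN hs hwc.isCompact).const_mul (C₁ * C₂ * C)).mono'
    (((measurable_incr hw.continuous).mul (measurable_incr hv.continuous)).mul
      (hk.comp measurable_snd)).aestronglyMeasurable ?_
  exact Filter.Eventually.of_forall fun p =>
    abs_increments_mul_le p hC₁ hC₂ hC (h1 _ _) (h2 _ _) (hkC _) incr_eq_zero

/-- The limiting divergence identity: the divergence theorem on `ℝ^N × ℝ^N` for the field
`(Ly, Lh)`, applied to `(w(y) - w(y+h))²` times the regularized kernels. -/
lemma integral_divergence_identity {N : ℕ} (hN : 1 ≤ N) {s : ℝ} (hs : s ∈ Set.Ioo (0 : ℝ) 1)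
    (L : EuclideanSpace ℝ (Fin N) →L[ℝ] EuclideanSpace ℝ (Fin N))
    {w : EuclideanSpace ℝ (Fin N) → ℝ} (hw : ContDiff ℝ 1 w) (hwc : HasCompactSupport w)
    (hD : ContDiff ℝ 1 (fun y => fderiv ℝ w y (L y)))
    (hDc : HasCompactSupport (fun y => fderiv ℝ w y (L y))) :
    ∫ p : EuclideanSpace ℝ (Fin N) × EuclideanSpace ℝ (Fin N),
      (incr w p * incr (fun y => fderiv ℝ w y (L y)) p *
          (2 * ‖p.2‖ ^ (-(N : ℝ) - 2 * s)) +
        incr w p * incr w p *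
          ((2 * LinearMap.trace ℝ _ L.toLinearMap +
            (-(N : ℝ) - 2 * s) * ⟪p.2, L p.2⟫ / ‖p.2‖ ^ 2) *
              ‖p.2‖ ^ (-(N : ℝ) - 2 * s))) = 0 := by
  set q : ℝ := -(N : ℝ) - 2 * s with hqdef
  have hq : q < 0 := by
    have := hs.1
    have : (0 : ℝ) ≤ N := Nat.cast_nonneg N
    rw [hqdef]; linarith
  set τ := LinearMap.trace ℝ _ L.toLinearMap with hτ
  set D := fun y => fderiv ℝ w y (L y) with hDdef
  obtain ⟨κ, C, hC, hκ, hκb, hκb', hκt, hκt'⟩ :=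
    exists_regularized_kernel (EuclideanSpace ℝ (Fin N)) hq
  obtain ⟨C₁, hC₁, h1⟩ := exists_increment_bound hw hwc
  obtain ⟨C₂, hC₂, h2⟩ := exists_increment_bound hD hDc
  let G : ℝ → EuclideanSpace ℝ (Fin N) × EuclideanSpace ℝ (Fin N) → ℝ := fun ε p =>
    incr w p * incr D p * (2 * κ ε p.2) +
      incr w p * incr w p * (fderiv ℝ (κ ε) p.2 (L p.2) + 2 * τ * κ ε p.2)
  have hGeq : ∀ ε, 0 < ε → G ε = fun p =>
      fderiv ℝ (fun p => incr w p ^ 2 * κ ε p.2) p (L.prodMap L p) +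
        2 * τ * (incr w p ^ 2 * κ ε p.2) := by
    intro ε hε
    funext p
    rw [fderiv_incr_mul hw (hκ ε hε).1]
    simp only [G]
    ring
  have hcont : ∀ ε, 0 < ε → Continuous
      (fun p => fderiv ℝ (fun p => incr w p ^ 2 * κ ε p.2) p (L.prodMap L p)) := fun ε hε =>
    ((contDiff_incr_mul hw (hκ ε hε).1).continuous_fderiv (by norm_num)).clm_apply
      (L.prodMap L).continuous
  have hG0 : ∀ ε, 0 < ε → ∫ p, G ε p = 0 := by
    intro ε hε
    have hF := contDiff_incr_mul hw (hκ ε hε).1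
    have hFc := hasCompactSupport_incr_mul hwc (hκ ε hε).2
    have : (volume : Measure (EuclideanSpace ℝ (Fin N) ×
        EuclideanSpace ℝ (Fin N))).IsAddHaarMeasure := by
      rw [Measure.volume_eq_prod]; infer_instance
    have hdiv := integral_fderiv_linear_field volume (L.prodMap L) hF hFc
    have htr : LinearMap.trace ℝ _ (L.prodMap L).toLinearMap = 2 * τ := by
      have : (L.prodMap L).toLinearMap = L.toLinearMap.prodMap L.toLinearMap := rfl
      rw [this, LinearMap.trace_prodMap']
      ring
    rw [hGeq ε hε, integral_add, integral_const_mul, hdiv, htr]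
    · ring
    · refine (hcont ε hε).integrable_of_hasCompactSupport ?_
      refine (hFc.fderiv ℝ).mono fun p hp => ?_
      contrapose! hp
      simp only [Function.mem_support, not_not] at hp ⊢
      simp [hp]
    · exact (hF.continuous.integrable_of_hasCompactSupport hFc).const_mul _
  have hlim := tendsto_integral_filter_of_dominated_convergence
    (μ := (volume : Measure (EuclideanSpace ℝ (Fin N) × EuclideanSpace ℝ (Fin N))))
    (l := nhdsWithin (0 : ℝ) (Set.Ioi 0)) (F := G)
    (f := fun p => incr w p * incr D p * (2 * ‖p.2‖ ^ q) +
        incr w p * incr w p * ((2 * τ + q * ⟪p.2, L p.2⟫ / ‖p.2‖ ^ 2) * ‖p.2‖ ^ q))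
    (fun p => C₁ * C₂ * 2 * prodMaj N s (tsupport w) p +
      C₁ * C₁ * (C * ‖L‖ + 2 * |τ|) * prodMaj N s (tsupport w) p) ?_ ?_ ?_ ?_
  · refine tendsto_nhds_unique hlim ?_
    refine tendsto_const_nhds.congr' ?_
    filter_upwards [self_mem_nhdsWithin] with ε hε
    exact (hG0 ε hε).symm
  · filter_upwards [self_mem_nhdsWithin] with ε hε
    rw [hGeq ε hε]
    exact ((hcont ε hε).add (continuous_const.mul
      (contDiff_incr_mul hw (hκ ε hε).1).continuous)).aestronglyMeasurable
  · filter_upwards [self_mem_nhdsWithin] with ε hε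
    refine Filter.Eventually.of_forall fun p => ?_
    refine (norm_add_le _ _).trans (add_le_add ?_ ?_)
    · refine abs_increments_mul_le p hC₁ hC₂ zero_le_two (h1 _ _) (h2 _ _) (fun hp => ?_)
        incr_eq_zero
      rw [abs_mul, abs_two]
      exact mul_le_mul_of_nonneg_left (hκb ε hε _ hp) zero_le_two
    · refine abs_increments_mul_le p hC₁ hC₁ (by positivity) (h1 _ _) (h1 _ _) (fun hp => ?_)
        incr_eq_zero
      have b1 := hκb ε hε _ hp
      have b2 := hκb' ε hε _ hp (L p.2)
      have hpos : 0 < ‖p.2‖ := norm_pos_iff.2 hp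
      have b3 : |fderiv ℝ (κ ε) p.2 (L p.2)| ≤ C * ‖L‖ * ‖p.2‖ ^ q := by
        refine le_of_mul_le_mul_left (b2.trans ?_) hpos
        calc C * ‖L p.2‖ * ‖p.2‖ ^ q ≤ C * (‖L‖ * ‖p.2‖) * ‖p.2‖ ^ q := by
              gcongr; exact L.le_opNorm _
          _ = _ := by ring
      calc _ ≤ |fderiv ℝ (κ ε) p.2 (L p.2)| + |2 * τ * κ ε p.2| := abs_add_le _ _
        _ ≤ C * ‖L‖ * ‖p.2‖ ^ q + 2 * |τ| * ‖p.2‖ ^ q := by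
            rw [abs_mul, abs_mul, abs_two]
            gcongr
        _ = _ := by rw [← hqdef]; ring
  · have := integrable_prodMaj hN hs hwc.isCompact
    exact (this.const_mul _).add (this.const_mul _)
  · refine Filter.Eventually.of_forall fun p => ?_
    by_cases hp : p.2 = 0
    · -- On the diagonal both sides vanish with the increment of `w`.
      have : incr w p = 0 := by simp [incr, hp]
      simp [G, this]
    · refine ((hκt _ hp).const_mul 2).const_mul _ |>.add (Filter.Tendsto.const_mul _ ?_)
      have := (hκt' _ hp (L p.2)).add ((hκt _ hp).const_mul (2 * τ))
      convert this using 2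
      ring

/-! ### From the bilinear form to the fractional Laplacian -/

/-- The bilinear form of the fractional Laplacian: integrating increments of `w` and `v` against
`|h|^{-N-2s}` pairs `v` with the second differences of `w`. -/
lemma integral_incr_mul_incr {N : ℕ} (hN : 1 ≤ N) {s : ℝ} (hs : s ∈ Set.Ioo (0 : ℝ) 1)
    {w v : EuclideanSpace ℝ (Fin N) → ℝ} (hw : ContDiff ℝ 2 w) (hwc : HasCompactSupport w)
    (hv : ContDiff ℝ 1 v) (hvc : HasCompactSupport v) :
    ∫ p : EuclideanSpace ℝ (Fin N) × EuclideanSpace ℝ (Fin N),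
        incr w p * incr v p * ‖p.2‖ ^ (-(N : ℝ) - 2 * s) =
      ∫ y, v y * ∫ h, (2 * w y - w (y + h) - w (y - h)) * ‖h‖ ^ (-(N : ℝ) - 2 * s) := by
  have hw1 : ContDiff ℝ 1 w := hw.of_le (by norm_num)
  have hwcont : Continuous w := hw.continuous
  have hvcont : Continuous v := hv.continuous
  have hkm : Measurable (fun h : EuclideanSpace ℝ (Fin N) => ‖h‖ ^ (-(N : ℝ) - 2 * s)) :=
    measurable_norm.pow_const _
  have hint := integrable_incr_mul_incr_mul hN hs hw1 hwc hv hvc hkm zero_le_one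
    (fun h _ => by rw [one_mul, abs_of_nonneg (by positivity)])
  -- For fixed `h`, translate the term carrying `v(y + h)` by `-h`.
  have hfix : ∀ h : EuclideanSpace ℝ (Fin N),
      ∫ y, incr w (y, h) * incr v (y, h) * ‖h‖ ^ (-(N : ℝ) - 2 * s) =
      ∫ y, v y * ((2 * w y - w (y + h) - w (y - h)) * ‖h‖ ^ (-(N : ℝ) - 2 * s)) := by
    intro h
    have i1 : Integrable (fun y => v y * (w y - w (y + h))) :=
      Continuous.integrable_of_hasCompactSupport (by fun_prop) hvc.mul_right
    have i2 : Integrable (fun y => v y * (w (y - h) - w y)) :=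
      Continuous.integrable_of_hasCompactSupport (by fun_prop) hvc.mul_right
    have i3 : Integrable (fun y => v (y + h) * (w (y + h - h) - w (y + h))) :=
      i2.comp_add_right h
    have t : ∫ y, v (y + h) * (w (y + h - h) - w (y + h)) = ∫ y, v y * (w (y - h) - w y) :=
      integral_add_right_eq_self (fun y => v y * (w (y - h) - w y)) h
    simp_rw [← mul_assoc]
    rw [integral_mul_const, integral_mul_const]
    congr 1
    calc ∫ y, incr w (y, h) * incr v (y, h)
        = ∫ y, (v y * (w y - w (y + h)) - v (y + h) * (w (y + h - h) - w (y + h))) := by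
          congr 1; funext y; simp only [incr, add_sub_cancel_right]; ring
      _ = (∫ y, v y * (w y - w (y + h))) - ∫ y, v y * (w (y - h) - w y) := by
          rw [integral_sub i1 i3, t]
      _ = ∫ y, v y * (2 * w y - w (y + h) - w (y - h)) := by
          rw [← integral_sub i1 i2]
          congr 1; funext y; ring
  obtain ⟨C, hC, hCb⟩ := exists_second_difference_bound hw hwc
  have hint2 : Integrable (Function.uncurry fun y h : EuclideanSpace ℝ (Fin N) =>
      v y * ((2 * w y - w (y + h) - w (y - h)) * ‖h‖ ^ (-(N : ℝ) - 2 * s)))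
      ((volume : Measure (EuclideanSpace ℝ (Fin N))).prod volume) := by
    have hvi : Integrable v := hvcont.integrable_of_hasCompactSupport hvc
    have hb := hvi.norm.mul_prod ((integrable_kerMaj hN hs).const_mul C)
    refine hb.mono' ?_ (Filter.Eventually.of_forall fun p => ?_)
    · have c1 : Continuous fun p : EuclideanSpace ℝ (Fin N) × EuclideanSpace ℝ (Fin N) =>
          2 * w p.1 - w (p.1 + p.2) - w (p.1 - p.2) := by fun_prop
      exact ((hvcont.measurable.comp measurable_fst).mul
        (c1.measurable.mul (hkm.comp measurable_snd))).aestronglyMeasurable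
    · simp only [Function.uncurry, norm_mul]
      have h1 := hCb p.1 p.2
      rw [← Real.norm_eq_abs] at h1
      rw [Real.norm_of_nonneg (by positivity : 0 ≤ ‖p.2‖ ^ (-(N : ℝ) - 2 * s))]
      calc _ ≤ ‖v p.1‖ * ((C * min 1 (‖p.2‖ ^ 2)) * ‖p.2‖ ^ (-(N : ℝ) - 2 * s)) := by gcongr
        _ = _ := by rw [kerMaj]; ring
  rw [Measure.volume_eq_prod] at hint ⊢
  rw [integral_prod_symm _ hint]
  simp_rw [hfix]
  rw [← integral_integral_swap hint2]
  simp_rw [integral_const_mul]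

lemma trace_toEuclideanLin {N : ℕ} (A : Matrix (Fin N) (Fin N) ℝ) :
    LinearMap.trace ℝ _ (Matrix.toEuclideanLin A) = A.trace := by
  rw [Matrix.toEuclideanLin_eq_toLin_orthonormal, Matrix.trace_toLin_eq]

/-- `∬ (w(y)-w(z))² |y-z|^{-N-2s} ω_A(y,z) dy dz
  = -2 ∫ (∇w(y)·Ay)(-Δ)^s w(y) dy`, with the double integral absolutely convergent. -/
theorem statement11 (N : ℕ) (hN : 1 ≤ N) (s : ℝ) (hs : s ∈ Set.Ioo (0 : ℝ) 1)
    (A : Matrix (Fin N) (Fin N) ℝ)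
    (w : EuclideanSpace ℝ (Fin N) → ℝ)
    (hw : ContDiff ℝ (⊤ : ℕ∞) w) (hwc : HasCompactSupport w) :
    Integrable (fun p : EuclideanSpace ℝ (Fin N) × EuclideanSpace ℝ (Fin N) =>
      (w p.1 - w p.2) ^ 2 * ‖p.1 - p.2‖ ^ (-(N : ℝ) - 2 * s) *
        omegaA N s A p.1 p.2) ∧
    (∫ p : EuclideanSpace ℝ (Fin N) × EuclideanSpace ℝ (Fin N),
      (w p.1 - w p.2) ^ 2 * ‖p.1 - p.2‖ ^ (-(N : ℝ) - 2 * s) *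
        omegaA N s A p.1 p.2) =
      -2 * ∫ y : EuclideanSpace ℝ (Fin N),
          ⟪gradient w y, Matrix.toEuclideanLin A y⟫ * fracLap N s w y := by
  set L : EuclideanSpace ℝ (Fin N) →L[ℝ] EuclideanSpace ℝ (Fin N) :=
    LinearMap.toContinuousLinearMap (Matrix.toEuclideanLin A) with hL
  have hLapp : ∀ x, Matrix.toEuclideanLin A x = L x := fun x => rfl
  have htr : LinearMap.trace ℝ _ L.toLinearMap = A.trace := trace_toEuclideanLin A
  have hw2 : ContDiff ℝ 2 w := by exact_mod_cast contDiff_infty.1 hw 2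
  have hw1 : ContDiff ℝ 1 w := hw2.of_le (by norm_num)
  have hD : ContDiff ℝ 1 (fun y => fderiv ℝ w y (L y)) :=
    (hw2.fderiv_right (by norm_num)).clm_apply L.contDiff
  have hDc : HasCompactSupport (fun y => fderiv ℝ w y (L y)) := by
    refine (hwc.fderiv ℝ).mono fun p hp => ?_
    contrapose! hp
    simp only [Function.mem_support, not_not] at hp ⊢
    simp [hp]
  have hdivid := integral_divergence_identity hN hs L hw1 hwc hD hDc
  have hbil := integral_incr_mul_incr hN hs hw2 hwc hD hDc
  rw [htr] at hdivid
  set q : ℝ := -(N : ℝ) - 2 * s with hq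
  set D := fun y => fderiv ℝ w y (L y) with hDdef
  let K : EuclideanSpace ℝ (Fin N) → ℝ := fun h => ‖h‖ ^ q
  let k : EuclideanSpace ℝ (Fin N) → ℝ := fun h =>
    (2 * A.trace + q * ⟪h, L h⟫ / ‖h‖ ^ 2) * ‖h‖ ^ q
  have hKm : Measurable K := measurable_norm.pow_const _
  have hkm : Measurable k := by
    refine Measurable.mul ?_ hKm
    refine measurable_const.add (Measurable.div ?_ (measurable_norm.pow_const 2))
    have : Continuous fun h : EuclideanSpace ℝ (Fin N) => q * ⟪h, L h⟫ := by fun_prop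
    exact this.measurable
  have hkb : ∀ h, h ≠ 0 → |k h| ≤ (2 * |A.trace| + |q| * ‖L‖) * ‖h‖ ^ q := by
    intro h hh
    have hpos : 0 < ‖h‖ := norm_pos_iff.2 hh
    have h1 : |⟪h, L h⟫| ≤ ‖L‖ * ‖h‖ ^ 2 := by
      calc _ ≤ ‖h‖ * ‖L h‖ := abs_real_inner_le_norm _ _
        _ ≤ ‖h‖ * (‖L‖ * ‖h‖) := by gcongr; exact L.le_opNorm h
        _ = _ := by ring
    have h2 : |q * ⟪h, L h⟫ / ‖h‖ ^ 2| ≤ |q| * ‖L‖ := by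
      rw [abs_div, abs_mul, abs_of_pos (by positivity : 0 < ‖h‖ ^ 2),
        div_le_iff₀ (by positivity), mul_assoc]
      gcongr
    simp only [k]
    rw [abs_mul, abs_of_nonneg (by positivity : 0 ≤ ‖h‖ ^ q)]
    gcongr
    refine (abs_add_le _ _).trans (add_le_add ?_ h2)
    rw [abs_mul, abs_two]
  have hi1 : Integrable (fun p => incr w p * incr D p * (2 * K p.2)) := by
    refine integrable_incr_mul_incr_mul (k := fun h => 2 * K h) hN hs hw1 hwc hD hDc
      (hKm.const_mul 2) zero_le_two fun h _ => ?_
    simp only [K]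
    rw [abs_mul, abs_two, abs_of_nonneg (by positivity)]
  have hi2 : Integrable (fun p => incr w p * incr w p * k p.2) :=
    integrable_incr_mul_incr_mul hN hs hw1 hwc hw1 hwc hkm (by positivity) hkb
  -- In the variables `(y, h)` with `z = y + h` the integrand is `c/2` times that of `hi2`.
  have hpull : (fun p : EuclideanSpace ℝ (Fin N) × EuclideanSpace ℝ (Fin N) =>
      (w p.1 - w p.2) ^ 2 * ‖p.1 - p.2‖ ^ q * omegaA N s A p.1 p.2) ∘
        (fun z => (z.1, z.1 + z.2)) =
      fun p => cNs N s / 2 * (incr w p * incr w p * k p.2) := by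
    funext p
    have e : p.1 - (p.1 + p.2) = -p.2 := by abel
    simp only [Function.comp_apply, omegaA, e, incr, k, hLapp, map_neg, inner_neg_neg, norm_neg]
    rw [real_inner_comm p.2 (L p.2), show (N : ℝ) + 2 * s = -q by rw [hq]; ring]
    ring
  have hmp := measurePreserving_prod_add (volume : Measure (EuclideanSpace ℝ (Fin N))) volume
  have hemb : MeasurableEmbedding
      (fun z : EuclideanSpace ℝ (Fin N) × EuclideanSpace ℝ (Fin N) => (z.1, z.1 + z.2)) :=
    (MeasurableEquiv.shearAddRight (EuclideanSpace ℝ (Fin N))).measurableEmbedding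
  rw [← Measure.volume_eq_prod] at hmp
  refine ⟨?_, ?_⟩
  · rw [← hmp.integrable_comp_emb hemb, hpull]
    exact hi2.const_mul _
  · rw [← hmp.integral_comp hemb]
    have hpull' := fun p => congrFun hpull p
    simp only [Function.comp_apply] at hpull'
    simp_rw [hpull']
    rw [integral_const_mul]
    have hsum := integral_add hi1 hi2
    have hzero : ∫ p, (incr w p * incr D p * (2 * K p.2) + incr w p * incr w p * k p.2) = 0 :=
      hdivid
    rw [hzero] at hsum
    have htwo : ∫ p, incr w p * incr D p * (2 * K p.2) =
        2 * ∫ p, incr w p * incr D p * K p.2 := by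
      rw [← integral_const_mul]
      congr 1; funext p; ring
    have hK : ∫ p, incr w p * incr D p * K p.2 = ∫ y, D y * ∫ h, (2 * w y - w (y + h) -
        w (y - h)) * ‖h‖ ^ q := hbil
    have hfl : ∫ y, ⟪gradient w y, Matrix.toEuclideanLin A y⟫ * fracLap N s w y =
        cNs N s / 2 * ∫ y, D y * ∫ h, (2 * w y - w (y + h) - w (y - h)) * ‖h‖ ^ q := by
      rw [← integral_const_mul]
      congr 1; funext y
      rw [inner_gradient_left, hLapp, fracLap]
      simp only [hDdef]
      ring
    rw [hfl, ← hK]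
    rw [htwo] at hsum
    linear_combination (-(cNs N s / 2)) * hsum
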